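/- Let F be a commutative ring containing the field ℚ of rational numbers and let A be a commutative F-algebra, flat as an F-module, generated as an F-algebra by finitely many elements a_1, …, a_m. Then TS^n_F(A) is generated as an F-algebra by the elements e_1^n(a), where a ranges over the monomials a_1^{α_1}⋯a_m^{α_m} of total degree α_1+⋯+α_m ≤ n. -/

import Mathlib

open scoped TensorProduct
open PiTensorProduct

universe u v w

namespace SymmetricProduct

variable (F : Type u) [CommRing F] (A : Type v) [CommRing A] [Algebra F A] (n : ℕ)

/-- The algebra homomorphism on the `n`-fold tensor power permuting factors by `σ`. -/
noncomputable def permHom (σ : Equiv.Perm (Fin n)) :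
    (⨂[F] _ : Fin n, A) →ₐ[F] (⨂[F] _ : Fin n, A) :=
  PiTensorProduct.liftAlgHom (MultilinearMap.domDomCongr σ (PiTensorProduct.tprod F))
    (by simp [MultilinearMap.domDomCongr_apply]; rfl)
    (fun x y => by
      simp only [MultilinearMap.domDomCongr_apply]
      rw [tprod_mul_tprod]; rfl)

@[simp] lemma permHom_tprod (σ : Equiv.Perm (Fin n)) (x : Fin n → A) :
    permHom F A n σ (tprod F x) = tprod F (fun i => x (σ i)) := by
  simp [permHom]

/-- `TS^n_F(A)`: the subalgebra of symmetric tensors in the `n`-fold tensor power of `A`. -/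
noncomputable def TS : Subalgebra F (⨂[F] _ : Fin n, A) where
  carrier := {x | ∀ σ : Equiv.Perm (Fin n), permHom F A n σ x = x}
  mul_mem' := fun hx hy σ => by rw [_root_.map_mul, hx σ, hy σ]
  add_mem' := fun hx hy σ => by rw [_root_.map_add, hx σ, hy σ]
  one_mem' := fun σ => map_one _
  algebraMap_mem' := fun r σ => AlgHom.commutes _ r

/-- `e_i^n(a)`: the sum over `i`-element subsets `S` of `Fin n` of the elementary tensors
having `a` in the slots of `S` and `1` elsewhere. -/
noncomputable def esym (i : ℕ) (a : A) : ⨂[F] _ : Fin n, A :=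
  ∑ S ∈ Finset.powersetCard i (Finset.univ : Finset (Fin n)),
    tprod F (fun j => if j ∈ S then a else 1)

lemma esym_mem (i : ℕ) (a : A) : esym F A n i a ∈ TS F A n := by
  intro σ
  rw [esym, map_sum]
  simp only [permHom_tprod]
  refine Finset.sum_nbij' (fun S => S.map σ.symm.toEmbedding)
    (fun S => S.map σ.toEmbedding) ?_ ?_ ?_ ?_ ?_
  · intro S hS
    simp only [Finset.mem_powersetCard_univ, Finset.card_map] at hS ⊢
    exact hS
  · intro S hS
    simp only [Finset.mem_powersetCard_univ, Finset.card_map] at hS ⊢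
    exact hS
  · intro S hS
    ext j
    simp
  · intro S hS
    ext j
    simp
  · intro S hS
    congr 1
    funext j
    have hiff : (σ j ∈ S) ↔ (j ∈ Finset.map σ.symm.toEmbedding S) := by
      constructor
      · intro h
        exact Finset.mem_map.2 ⟨σ j, h, σ.symm_apply_apply j⟩
      · intro h
        obtain ⟨s, hs, rfl⟩ := Finset.mem_map.1 h
        simpa using hs
    simp only [hiff]

/-- `e_i^n(a)` as an element of `TS^n_F(A)`. -/
noncomputable def esymT (i : ℕ) (a : A) : TS F A n := ⟨esym F A n i a, esym_mem F A n i a⟩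

lemma tprod_const_mem (a : A) : (tprod F (fun _ : Fin n => a)) ∈ TS F A n := fun σ => by
  simp

/-- `a^{⊗ n}` as an element of `TS^n_F(A)`. -/
noncomputable def tpow (a : A) : TS F A n := ⟨tprod F (fun _ : Fin n => a), tprod_const_mem F A n a⟩



/-- The inclusion of `A` into the `j`-th tensor factor. -/
noncomputable def inc (j : Fin n) : A →ₐ[F] (⨂[F] _ : Fin n, A) :=
  PiTensorProduct.singleAlgHom (R := F) (A := fun _ : Fin n => A) j

/-- The power sum `e_1^n` as a linear map. -/
noncomputable def psum : A →ₗ[F] (⨂[F] _ : Fin n, A) :=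
  ∑ j, (inc F A n j).toLinearMap

lemma psum_apply (x : A) : psum F A n x = ∑ j, inc F A n j x := by
  simp [psum]

lemma inc_apply (j : Fin n) (x : A) :
    inc F A n j x = tprod F (Pi.mulSingle j x : Fin n → A) := rfl

lemma esym_one_eq (x : A) : esym F A n 1 x = psum F A n x := by
  rw [esym, psum_apply, Finset.powersetCard_one, Finset.sum_map]
  refine Finset.sum_congr rfl fun j _ => ?_
  rw [inc_apply]
  congr 1
  funext i
  by_cases h : i = j
  · subst h; simp
  · simp [h]

lemma tprod_eq_prod (x : Fin n → A) : tprod F x = ∏ j, inc F A n j (x j) := by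
  simp only [inc_apply]
  have h := map_prod (PiTensorProduct.tprodMonoidHom (A := fun _ : Fin n => A) F)
    (fun j => Pi.mulSingle j (x j)) Finset.univ
  rw [Finset.univ_prod_mulSingle] at h
  simpa using h

/-- Sum over injective maps. -/
noncomputable def injSum (k : ℕ) (x : Fin k → A) : ⨂[F] _ : Fin n, A :=
  ∑ f : Fin k ↪ Fin n, ∏ i, inc F A n (f i) (x i)

lemma injSum_zero (x : Fin 0 → A) : injSum F A n 0 x = 1 := by
  simp [injSum]

lemma prod_inc_mulSingle (k : ℕ) (f : Fin k → Fin n) (x : Fin k → A) (y : A) (i : Fin k) :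
    ∏ l, inc F A n (f l) ((x * Pi.mulSingle i y : Fin k → A) l)
      = (∏ l, inc F A n (f l) (x l)) * inc F A n (f i) y := by
  simp only [Pi.mul_apply, _root_.map_mul, Finset.prod_mul_distrib]
  congr 1
  rw [Finset.prod_eq_single i]
  · simp
  · intro b _ hb
    simp [hb]
  · simp

lemma injSum_succ (k : ℕ) (x0 : A) (x : Fin k → A) :
    injSum F A n (k + 1) (Fin.cons x0 x)
      = psum F A n x0 * injSum F A n k x
        - ∑ i, injSum F A n k (x * Pi.mulSingle i x0) := by
  classical
  have h1 : injSum F A n (k + 1) (Fin.cons x0 x)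
      = ∑ f : Fin k ↪ Fin n, ∑ j : {j // j ∉ Set.range f},
          inc F A n j x0 * ∏ i, inc F A n (f i) (x i) := by
    rw [injSum, ← Equiv.sum_comp (Equiv.embeddingFinSucc k (Fin n)).symm, Fintype.sum_sigma]
    refine Finset.sum_congr rfl fun f _ => Finset.sum_congr rfl fun j _ => ?_
    rw [Fin.prod_univ_succ]
    simp
  rw [h1]
  simp only [injSum]
  rw [Finset.sum_comm, Finset.mul_sum, ← Finset.sum_sub_distrib]
  refine Finset.sum_congr rfl fun f _ => ?_
  simp only [prod_inc_mulSingle]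
  rw [← Finset.sum_mul, ← Finset.mul_sum, mul_comm (∏ i, _), ← sub_mul]
  congr 1
  rw [psum_apply, eq_sub_iff_add_eq,
    ← Fintype.sum_subtype_add_sum_subtype (fun j => j ∉ Set.range f)]
  congr 1
  have e : Fin k ≃ {j // ¬ j ∉ Set.range f} :=
    (Equiv.ofInjective f f.injective).trans (Equiv.subtypeEquivRight (by simp))
  refine Fintype.sum_equiv ((Equiv.ofInjective f f.injective).trans
    (Equiv.subtypeEquivRight (by simp))) _ _ ?_
  intro i
  rfl

lemma injSum_mem (B : Subalgebra F (⨂[F] _ : Fin n, A)) (hB : ∀ x, psum F A n x ∈ B)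
    (k : ℕ) : ∀ x : Fin k → A, injSum F A n k x ∈ B := by
  induction k with
  | zero => intro x; rw [injSum_zero]; exact B.one_mem
  | succ k ih =>
    intro x
    rw [← Fin.cons_self_tail x, injSum_succ]
    exact B.sub_mem (B.mul_mem (hB _) (ih _)) (B.sum_mem fun i _ => ih _)

lemma TS_le [Algebra ℚ F] (B : Subalgebra F (⨂[F] _ : Fin n, A))
    (hB : ∀ x, psum F A n x ∈ B) : TS F A n ≤ B := by
  intro t ht
  have key : ∀ s : ⨂[F] _ : Fin n, A, ∑ σ, permHom F A n σ s ∈ B := by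
    intro s
    induction s using PiTensorProduct.induction_on with
    | smul_tprod r x =>
      simp only [map_smul, permHom_tprod]
      rw [← Finset.smul_sum]
      refine B.smul_mem ?_ r
      have : ∑ σ : Equiv.Perm (Fin n), tprod F (fun i => x (σ i)) = injSum F A n n x := by
        rw [injSum, ← Equiv.sum_comp (Equiv.inv (Equiv.Perm (Fin n)))]
        refine Fintype.sum_equiv (Equiv.embeddingEquivOfFinite (Fin n)).symm _ _ fun σ => ?_
        rw [tprod_eq_prod, ← Equiv.prod_comp σ]
        refine Finset.prod_congr rfl fun i _ => ?_
        exact congrArg (fun z => inc F A n (σ i) (x z)) (Equiv.symm_apply_apply σ i)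
      rw [this]
      exact injSum_mem F A n B hB n x
    | add s t hs ht =>
      simp only [_root_.map_add, Finset.sum_add_distrib]
      exact B.add_mem hs ht
  have h := key t
  rw [Finset.sum_congr rfl fun σ _ => ht σ, Finset.sum_const, Finset.card_univ,
    Fintype.card_perm, Fintype.card_fin] at h
  have h2 := B.smul_mem h (algebraMap ℚ F (1 / (n.factorial : ℚ)))
  have h3 : algebraMap ℚ F (1 / (n.factorial : ℚ)) * (n.factorial : F) = 1 := by
    rw [← map_natCast (algebraMap ℚ F), ← _root_.map_mul,
      one_div_mul_cancel (by exact_mod_cast n.factorial_ne_zero), map_one]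
  rwa [← Nat.cast_smul_eq_nsmul F, smul_smul, h3, one_smul] at h2

section Mono

variable {A} {m : ℕ} (a : Fin m → A)

/-- Monomials. -/
def mon (α : Fin m → ℕ) : A := ∏ j, a j ^ α j

/-- Total degree. -/
def deg (α : Fin m → ℕ) : ℕ := ∑ j, α j

lemma mon_zero : mon a 0 = 1 := by simp [mon]

lemma mon_add (α β : Fin m → ℕ) : mon a (α + β) = mon a α * mon a β := by
  simp [mon, pow_add, Finset.prod_mul_distrib]

lemma deg_add (α β : Fin m → ℕ) : deg (α + β) = deg α + deg β := by
  simp [deg, Finset.sum_add_distrib]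

lemma mon_comp {k : ℕ} (x : Fin k → Fin m → ℕ) (y : Fin m → ℕ) (i : Fin k) :
    (fun l => mon a (x l)) * Pi.mulSingle i (mon a y)
      = fun l => mon a ((x + Pi.single i y : Fin k → Fin m → ℕ) l) := by
  funext l
  by_cases h : l = i
  · subst h; simp [mon_add]
  · simp [h]

lemma deg_upd {k : ℕ} (x : Fin k → Fin m → ℕ) (y : Fin m → ℕ) (i : Fin k) :
    ∑ l, (x + Pi.single i y : Fin k → Fin m → ℕ) l = y + ∑ l, x l := by
  simp [Finset.sum_add_distrib, add_comm]

lemma cons_mon {k : ℕ} (x : Fin (k + 1) → Fin m → ℕ) :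
    (fun l => mon a (x l)) = Fin.cons (mon a (x 0)) (fun l : Fin k => mon a (x l.succ)) := by
  funext l
  refine Fin.cases ?_ (fun i => ?_) l <;> simp

variable (B : Subalgebra F (⨂[F] _ : Fin n, A)) (D : ℕ)

lemma injSum_mon_mem (hB : ∀ α : Fin m → ℕ, deg α < D → psum F A n (mon a α) ∈ B) (k : ℕ) :
    ∀ x : Fin k → Fin m → ℕ, deg (∑ i, x i) < D →
      injSum F A n k (fun i => mon a (x i)) ∈ B := by
  induction k with
  | zero => intro x _; rw [injSum_zero]; exact B.one_mem
  | succ k ih =>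
    intro x hx
    rw [cons_mon, injSum_succ]
    rw [Fin.sum_univ_succ] at hx
    refine B.sub_mem (B.mul_mem (hB _ ?_) (ih _ ?_)) (B.sum_mem fun i _ => ?_)
    · rw [deg_add] at hx; omega
    · rw [deg_add] at hx; omega
    · rw [mon_comp]
      refine ih _ ?_
      rwa [deg_upd]

lemma injSum_mon_top (hB : ∀ α : Fin m → ℕ, deg α < D → psum F A n (mon a α) ∈ B) (k : ℕ) :
    ∀ x : Fin (k + 1) → Fin m → ℕ, deg (∑ i, x i) = D → (∀ i, 1 ≤ deg (x i)) →
      injSum F A n (k + 1) (fun i => mon a (x i))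
        - ((-1) ^ k * (k.factorial : F)) • psum F A n (mon a (∑ i, x i)) ∈ B := by
  induction k with
  | zero =>
    intro x _ _
    rw [cons_mon, injSum_succ]
    simp [injSum_zero]
  | succ k ih =>
    intro x hx h1
    rw [cons_mon, injSum_succ]
    rw [Fin.sum_univ_succ] at hx
    have hd := hx
    rw [deg_add] at hd
    have hp : 1 ≤ deg (∑ i : Fin (k + 1), x i.succ) := by
      rw [Fin.sum_univ_succ, deg_add]
      have := h1 (Fin.succ 0)
      omega
    have h0 := h1 0
    have hm : psum F A n (mon a (x 0))
        * injSum F A n (k + 1) (fun l : Fin (k + 1) => mon a (x l.succ)) ∈ B :=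
      B.mul_mem (hB _ (by omega)) (injSum_mon_mem F n a B D hB _ _ (by omega))
    have hs : ∑ i : Fin (k + 1), (injSum F A n (k + 1)
          ((fun l : Fin (k + 1) => mon a (x l.succ)) * Pi.mulSingle i (mon a (x 0)))
        - ((-1) ^ k * (k.factorial : F)) • psum F A n (mon a (∑ i, x i))) ∈ B := by
      refine B.sum_mem fun i _ => ?_
      have := ih ((fun l : Fin (k + 1) => x l.succ) + Pi.single i (x 0))
        (by rwa [deg_upd]) (by
          intro l
          rw [Pi.add_apply, deg_add]
          have := h1 l.succ
          omega)
      rw [deg_upd] at this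
      rw [mon_comp, Fin.sum_univ_succ x]
      exact this
    have hfin := B.sub_mem hm hs
    convert hfin using 1
    have hc : (-1) ^ (k + 1) * ((k + 1).factorial : F)
        = -(((k + 1 : ℕ) : F) * ((-1) ^ k * (k.factorial : F))) := by
      rw [Nat.factorial_succ]
      push_cast
      ring
    rw [Finset.sum_sub_distrib, Finset.sum_const, Finset.card_univ, Fintype.card_fin,
      ← Nat.cast_smul_eq_nsmul F, smul_smul, hc, neg_smul]
    abel

lemma exists_split (k : ℕ) : ∀ α : Fin m → ℕ, k + 1 ≤ deg α →
    ∃ x : Fin (k + 1) → Fin m → ℕ, ∑ i, x i = α ∧ ∀ i, 1 ≤ deg (x i) := by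
  induction k with
  | zero => intro α h; exact ⟨fun _ => α, by simp, fun _ => by simpa using h⟩
  | succ k ih =>
    intro α h
    obtain ⟨j, hj⟩ : ∃ j, α j ≠ 0 := by
      by_contra hc
      push Not at hc
      simp [deg, hc] at h
    have hα : α = Pi.single j 1 + (α - Pi.single j 1) := by
      funext l
      by_cases hl : l = j
      · subst hl; simp; omega
      · simp [hl]
    have hdj : deg (Pi.single j 1 : Fin m → ℕ) = 1 := by simp [deg]
    have hd := congrArg deg hα
    rw [deg_add, hdj] at hd
    obtain ⟨x, hx, hx1⟩ := ih (α - Pi.single j 1) (by omega)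
    refine ⟨Fin.cons (Pi.single j 1) x, ?_, ?_⟩
    · rw [Fin.sum_univ_succ]
      simp only [Fin.cons_zero, Fin.cons_succ, hx]
      exact hα.symm
    · intro i
      refine Fin.cases ?_ (fun i => ?_) i
      · simp [hdj]
      · simpa using hx1 i

lemma psum_mon_mem [Algebra ℚ F]
    (hB : ∀ α : Fin m → ℕ, deg α ≤ n → psum F A n (mon a α) ∈ B) :
    ∀ (D : ℕ) (α : Fin m → ℕ), deg α = D → psum F A n (mon a α) ∈ B := by
  intro D
  induction D using Nat.strong_induction_on with
  | _ D ih =>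
    intro α hα
    by_cases hn : deg α ≤ n
    · exact hB α hn
    obtain ⟨x, hx, hx1⟩ := exists_split n α (by omega)
    have h := injSum_mon_top F n a B D (fun β hβ => ih _ hβ β rfl) n x (by rw [hx, hα]) hx1
    have hz : injSum F A n (n + 1) (fun i => mon a (x i)) = 0 := by
      have : IsEmpty (Fin (n + 1) ↪ Fin n) :=
        ⟨fun f => by simpa using Fintype.card_le_of_embedding f⟩
      simp [injSum]
    rw [hz, zero_sub, hx] at h
    have h2 := B.smul_mem (B.neg_mem h) (algebraMap ℚ F ((-1) ^ n / (n.factorial : ℚ)))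
    have h3 : algebraMap ℚ F ((-1) ^ n / (n.factorial : ℚ)) * ((-1) ^ n * (n.factorial : F))
        = 1 := by
      have e : ((-1) ^ n * (n.factorial : F))
          = algebraMap ℚ F ((-1) ^ n * (n.factorial : ℚ)) := by simp
      have hf : (n.factorial : ℚ) ≠ 0 := by exact_mod_cast n.factorial_ne_zero
      have e2 : ((-1) ^ n / (n.factorial : ℚ)) * ((-1) ^ n * (n.factorial : ℚ)) = 1 := by
        field_simp
        rw [← pow_mul, mul_comm, pow_mul]
        simp
      rw [e, ← _root_.map_mul, e2, map_one]
    rwa [neg_neg, smul_smul, h3, one_smul] at h2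

lemma span_mon (ha : Algebra.adjoin F (Set.range a) = ⊤) :
    Submodule.span F (Set.range (mon a)) = ⊤ := by
  rw [← Algebra.top_toSubmodule, ← ha, Algebra.adjoin_eq_span]
  congr 1
  ext y
  constructor
  · rintro ⟨α, rfl⟩
    exact Submonoid.prod_mem _ fun j _ =>
      Submonoid.pow_mem _ (Submonoid.subset_closure (Set.mem_range_self j)) _
  · intro hy
    induction hy using Submonoid.closure_induction with
    | mem y hy =>
      obtain ⟨j, rfl⟩ := hy
      refine ⟨Pi.single j 1, ?_⟩
      rw [mon, Finset.prod_eq_single j]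
      · simp
      · intro b _ hb; simp [hb]
      · simp
    | one => exact ⟨0, mon_zero a⟩
    | mul y z _ _ hy hz =>
      obtain ⟨α, rfl⟩ := hy
      obtain ⟨β, rfl⟩ := hz
      exact ⟨α + β, mon_add a α β⟩

end Mono

/-- **Generators in characteristic zero.** If `F ⊇ ℚ` and the flat commutative `F`-algebra
`A` is generated by `a_1, …, a_m`, then `TS^n_F(A)` is generated as an `F`-algebra by the
elements `e_1^n(a)`, `a` ranging over monomials in the `a_j` of total degree at most `n`. -/
theorem ts_generated_by_esym_one_monomials [Algebra ℚ F] [Module.Flat F A]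
    (m : ℕ) (a : Fin m → A) (ha : Algebra.adjoin F (Set.range a) = ⊤) :
    Algebra.adjoin F
        {x : ⨂[F] _ : Fin n, A |
          ∃ α : Fin m → ℕ, (∑ j, α j) ≤ n ∧ x = esym F A n 1 (∏ j, a j ^ α j)}
      = TS F A n := by
  apply le_antisymm
  · rw [Algebra.adjoin_le_iff]
    rintro x ⟨α, -, rfl⟩
    exact esym_mem F A n 1 _
  · apply TS_le
    set B := Algebra.adjoin F
        {x : ⨂[F] _ : Fin n, A |
          ∃ α : Fin m → ℕ, (∑ j, α j) ≤ n ∧ x = esym F A n 1 (∏ j, a j ^ α j)} with hBdef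
    have hB : ∀ α : Fin m → ℕ, deg α ≤ n → psum F A n (mon a α) ∈ B := by
      intro α hα
      rw [← esym_one_eq]
      exact Algebra.subset_adjoin ⟨α, hα, rfl⟩
    have hall := psum_mon_mem F n a B hB
    intro x
    have hx : x ∈ Submodule.span F (Set.range (mon a)) := by
      rw [span_mon F a ha]; trivial
    induction hx using Submodule.span_induction with
    | mem y hy =>
      obtain ⟨α, rfl⟩ := hy
      exact hall _ α rfl
    | zero => rw [map_zero]; exact B.zero_mem
    | add y z _ _ hy hz => rw [_root_.map_add]; exact B.add_mem hy hz
    | smul r y _ hy => rw [map_smul]; exact B.smul_mem hy r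


end SymmetricProduct
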